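/- For sets A, B ⊆ ℕ, lim_{n→∞} (A(n) − B(n))/n = 0 if and only if μ(A) = μ(B) for every density measure μ. -/

import Mathlib

/-!
Given disjoint `A` and `B`, let `C` consist of every second element of the complement of `A ∪ B`.
Then `C(n) = (n - A(n) - B(n)) / 2 + O(1)`, so if `(A(n) - B(n)) / n → 0`, both `A ∪ C` and `B ∪ C`
have density `1 / 2`; every density measure `μ` thus satisfies `μ A + μ C = 1 / 2 = μ B + μ C`.
The general case follows by removing `A ∩ B` from both sets. Conversely, the limits of `A(n) / n`
along any free ultrafilter form a density measure, and a sequence tending to `0` along every free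
ultrafilter tends to `0`.
-/

open Filter Topology

/-- The counting function `A(n) = |A ∩ [1, n]|`, as a real number. -/
noncomputable def count (A : Set ℕ) (n : ℕ) : ℝ :=
  ((A ∩ Set.Icc 1 n).ncard : ℝ)

/-- `A ⊆ ℕ` has asymptotic density `a`, i.e. `A(n)/n → a`. -/
def HasDensity (A : Set ℕ) (a : ℝ) : Prop :=
  Filter.Tendsto (fun n : ℕ => count A n / n) Filter.atTop (nhds a)

/-- Membership of a permutation `π` of `ℕ` in the Lévy group `𝒢`:
`|{k : k ≤ n < π(k)}| / n → 0`. -/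
def InLevyGroup (π : Equiv.Perm ℕ) : Prop :=
  Filter.Tendsto
    (fun n : ℕ => (({k : ℕ | k ≤ n ∧ n < π k}.ncard : ℝ) / n))
    Filter.atTop (nhds 0)

/-- A finitely additive probability measure defined on all subsets of `ℕ`,
with values in `[0, 1]`. -/
def IsFAMeasure (μ : Set ℕ → ℝ) : Prop :=
  (∀ A : Set ℕ, 0 ≤ μ A) ∧ (∀ A : Set ℕ, μ A ≤ 1) ∧ μ Set.univ = 1 ∧
    ∀ A B : Set ℕ, Disjoint A B → μ (A ∪ B) = μ A + μ B

/-- A density measure: a finitely additive measure extending asymptotic density. -/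
def IsDensityMeasure (μ : Set ℕ → ℝ) : Prop :=
  IsFAMeasure μ ∧ ∀ (A : Set ℕ) (a : ℝ), HasDensity A a → μ A = a

/-- Statistical convergence of a real sequence `x` to `L`: for every `ε > 0`
the set `{n : |x n − L| ≥ ε}` has asymptotic density zero. -/
def StatTendsto (x : ℕ → ℝ) (L : ℝ) : Prop :=
  ∀ ε : ℝ, 0 < ε → HasDensity {n : ℕ | ε ≤ |x n - L|} 0

/-- The limit of a (bounded) real sequence along an ultrafilter on `ℕ`. -/
noncomputable def ulim (𝒰 : Ultrafilter ℕ) (x : ℕ → ℝ) : ℝ :=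
  limUnder (𝒰 : Filter ℕ) x

theorem sub_eq_sub_sdiff_of_disjoint_additive {α G : Type*} [GeneralizedBooleanAlgebra α]
    [AddCommGroup G] {f : α → G} (hf : ∀ a b, Disjoint a b → f (a ⊔ b) = f a + f b) (a b : α) :
    f a - f b = f (a \ b) - f (b \ a) := by
  have ha : f a = f (a ⊓ b) + f (a \ b) := by
    rw [← hf _ _ disjoint_inf_sdiff, sup_inf_sdiff]
  have hb : f b = f (a ⊓ b) + f (b \ a) := by
    rw [inf_comm, ← hf _ _ disjoint_inf_sdiff, sup_inf_sdiff]
  rw [ha, hb, add_sub_add_left_eq_sub]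

theorem count_nonneg (A : Set ℕ) (n : ℕ) : 0 ≤ count A n :=
  Nat.cast_nonneg _

theorem count_univ (n : ℕ) : count Set.univ n = n := by
  simp [count, Set.ncard_eq_toFinset_card']

theorem count_union {A B : Set ℕ} (h : Disjoint A B) (n : ℕ) :
    count (A ∪ B) n = count A n + count B n := by
  rw [count, Set.union_inter_distrib_right,
    Set.ncard_union_eq (h.mono Set.inter_subset_left Set.inter_subset_left)
      ((Set.finite_Icc 1 n).inter_of_right A) ((Set.finite_Icc 1 n).inter_of_right B),
    Nat.cast_add, count, count]

theorem count_compl (A : Set ℕ) (n : ℕ) : count Aᶜ n = n - count A n := by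
  rw [eq_sub_iff_add_eq', ← count_union disjoint_compl_right, Set.union_compl_self, count_univ]

theorem count_le (A : Set ℕ) (n : ℕ) : count A n ≤ n := by
  linarith [count_compl A n, count_nonneg Aᶜ n]

theorem count_div_mem_Icc (A : Set ℕ) (n : ℕ) : count A n / n ∈ Set.Icc (0 : ℝ) 1 :=
  ⟨div_nonneg (count_nonneg A n) n.cast_nonneg, div_le_one_of_le₀ (count_le A n) n.cast_nonneg⟩

theorem hasDensity_univ : HasDensity Set.univ 1 := by
  refine tendsto_const_nhds.congr' ?_
  filter_upwards [eventually_ne_atTop 0] with n hn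
  rw [count_univ, div_self (Nat.cast_ne_zero.mpr hn)]

theorem ncard_inter_Icc_succ (A : Set ℕ) (n : ℕ) [Decidable (n + 1 ∈ A)] :
    (A ∩ Set.Icc 1 (n + 1)).ncard = (A ∩ Set.Icc 1 n).ncard + if n + 1 ∈ A then 1 else 0 := by
  rw [← Set.insert_Icc_right_eq_Icc_add_one (by lia)]
  split_ifs with h
  · rw [Set.inter_insert_of_mem h,
      Set.ncard_insert_of_notMem (by simp) ((Set.finite_Icc 1 n).inter_of_right A)]
  · rw [Set.inter_insert_of_notMem h, add_zero]

/-- Every second element of `D`, namely those `k ∈ D` for which `|D ∩ [1, k]|` is even. For `k ≥ 1`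
these are the second, fourth, ... positive elements of `D`; the element `0` of `D`, invisible to
`count`, is kept. -/
def everySecond (D : Set ℕ) : Set ℕ :=
  {k ∈ D | Even (D ∩ Set.Icc 1 k).ncard}

theorem everySecond_subset (D : Set ℕ) : everySecond D ⊆ D :=
  Set.sep_subset _ _

theorem ncard_everySecond_inter_Icc (D : Set ℕ) (n : ℕ) :
    (everySecond D ∩ Set.Icc 1 n).ncard = (D ∩ Set.Icc 1 n).ncard / 2 := by
  classical
  induction n with
  | zero => simp
  | succ n ih =>
    have hmem : n + 1 ∈ everySecond D ↔ n + 1 ∈ D ∧ Even (D ∩ Set.Icc 1 (n + 1)).ncard := Iff.rfl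
    rw [ncard_inter_Icc_succ, ih, hmem, ncard_inter_Icc_succ, Nat.even_iff]
    grind

theorem abs_count_everySecond_sub_half_le (D : Set ℕ) (n : ℕ) :
    |count (everySecond D) n - count D n / 2| ≤ 1 / 2 := by
  have hlower := Nat.cast_div_le (α := ℝ) (m := (D ∩ Set.Icc 1 n).ncard) (n := 2)
  have hupper : ((D ∩ Set.Icc 1 n).ncard : ℝ) ≤ 2 * ((D ∩ Set.Icc 1 n).ncard / 2 : ℕ) + 1 := by
    norm_cast
    lia
  rw [count, count, ncard_everySecond_inter_Icc, abs_le]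
  push_cast at hlower
  constructor <;> linarith

theorem tendsto_count_everySecond_sub_half_div (D : Set ℕ) :
    Tendsto (fun n : ℕ => (count (everySecond D) n - count D n / 2) / n) atTop (𝓝 0) := by
  refine squeeze_zero_norm (fun n => ?_) (tendsto_const_div_atTop_nhds_zero_nat (1 / 2))
  rw [norm_div, Real.norm_natCast]
  exact div_le_div_of_nonneg_right (abs_count_everySecond_sub_half_le D n) n.cast_nonneg

theorem hasDensity_union_everySecond_compl {A B : Set ℕ} (hAB : Disjoint A B)
    (h : Tendsto (fun n : ℕ => (count A n - count B n) / n) atTop (𝓝 0)) :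
    HasDensity (A ∪ everySecond (A ∪ B)ᶜ) (1 / 2) := by
  have hdisj : Disjoint A (everySecond (A ∪ B)ᶜ) :=
    disjoint_compl_right.mono Set.subset_union_left (everySecond_subset _)
  have hlim := ((h.div_const 2).add
    (tendsto_count_everySecond_sub_half_div (A ∪ B)ᶜ)).const_add (1 / 2)
  rw [zero_div, add_zero, add_zero] at hlim
  refine hlim.congr' ?_
  filter_upwards [eventually_ne_atTop 0] with n hn
  rw [count_union hdisj, count_compl, count_union hAB]
  field

theorem IsDensityMeasure.eq_of_disjoint_of_tendsto_count_sub_div {μ : Set ℕ → ℝ}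
    (hμ : IsDensityMeasure μ) {A B : Set ℕ} (hAB : Disjoint A B)
    (h : Tendsto (fun n : ℕ => (count A n - count B n) / n) atTop (𝓝 0)) : μ A = μ B := by
  obtain ⟨⟨-, -, -, hadd⟩, hdens⟩ := hμ
  have h' : Tendsto (fun n : ℕ => (count B n - count A n) / n) atTop (𝓝 0) := by
    simpa only [neg_zero, ← neg_div, neg_sub] using h.neg
  set C := everySecond (A ∪ B)ᶜ with hC
  have hdisj : Disjoint (A ∪ B) C := disjoint_compl_right.mono_right (everySecond_subset _)
  have hA : μ (A ∪ C) = 1 / 2 := hdens _ _ (hasDensity_union_everySecond_compl hAB h)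
  have hB : μ (B ∪ C) = 1 / 2 := by
    rw [hC, Set.union_comm A B]
    exact hdens _ _ (hasDensity_union_everySecond_compl hAB.symm h')
  rw [hadd _ _ (hdisj.mono_left Set.subset_union_left)] at hA
  rw [hadd _ _ (hdisj.mono_left Set.subset_union_right)] at hB
  linarith

theorem IsDensityMeasure.eq_of_tendsto_count_sub_div {μ : Set ℕ → ℝ}
    (hμ : IsDensityMeasure μ) {A B : Set ℕ}
    (h : Tendsto (fun n : ℕ => (count A n - count B n) / n) atTop (𝓝 0)) : μ A = μ B := by
  have hcount (n : ℕ) : count A n - count B n = count (A \ B) n - count (B \ A) n :=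
    sub_eq_sub_sdiff_of_disjoint_additive (f := fun S => count S n)
      (fun _ _ hST => count_union hST n) A B
  simp only [hcount] at h
  rw [← sub_eq_zero, sub_eq_sub_sdiff_of_disjoint_additive hμ.1.2.2.2,
    hμ.eq_of_disjoint_of_tendsto_count_sub_div disjoint_sdiff_sdiff h, sub_self]

theorem tendsto_ulim_of_isCompact {𝒰 : Ultrafilter ℕ} {x : ℕ → ℝ} {K : Set ℝ} (hK : IsCompact K)
    (hx : ∀ᶠ n in 𝒰, x n ∈ K) : Tendsto x 𝒰 (𝓝 (ulim 𝒰 x)) :=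
  have ⟨a, _, ha⟩ := hK.ultrafilter_le_nhds (𝒰.map x) (tendsto_principal.mpr hx)
  tendsto_nhds_limUnder ⟨a, ha⟩

/-- The density of `A` along the ultrafilter `𝒰`: the limit of `A(n) / n` along `𝒰`. -/
noncomputable def ultrafilterDensity (𝒰 : Ultrafilter ℕ) (A : Set ℕ) : ℝ :=
  ulim 𝒰 fun n => count A n / n

theorem tendsto_ultrafilterDensity (𝒰 : Ultrafilter ℕ) (A : Set ℕ) :
    Tendsto (fun n : ℕ => count A n / n) 𝒰 (𝓝 (ultrafilterDensity 𝒰 A)) :=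
  tendsto_ulim_of_isCompact isCompact_Icc (.of_forall (count_div_mem_Icc A))

theorem ultrafilterDensity_mem_Icc (𝒰 : Ultrafilter ℕ) (A : Set ℕ) :
    ultrafilterDensity 𝒰 A ∈ Set.Icc (0 : ℝ) 1 :=
  isClosed_Icc.mem_of_tendsto (tendsto_ultrafilterDensity 𝒰 A) (.of_forall (count_div_mem_Icc A))

theorem ultrafilterDensity_union (𝒰 : Ultrafilter ℕ) {A B : Set ℕ} (h : Disjoint A B) :
    ultrafilterDensity 𝒰 (A ∪ B) = ultrafilterDensity 𝒰 A + ultrafilterDensity 𝒰 B := by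
  refine tendsto_nhds_unique (tendsto_ultrafilterDensity 𝒰 (A ∪ B)) ?_
  simp only [count_union h, add_div]
  exact (tendsto_ultrafilterDensity 𝒰 A).add (tendsto_ultrafilterDensity 𝒰 B)

theorem HasDensity.ultrafilterDensity_eq {A : Set ℕ} {a : ℝ} (h : HasDensity A a)
    {𝒰 : Ultrafilter ℕ} (h𝒰 : (𝒰 : Filter ℕ) ≤ atTop) : ultrafilterDensity 𝒰 A = a :=
  tendsto_nhds_unique (tendsto_ultrafilterDensity 𝒰 A) (h.mono_left h𝒰)

theorem isDensityMeasure_ultrafilterDensity {𝒰 : Ultrafilter ℕ} (h𝒰 : (𝒰 : Filter ℕ) ≤ atTop) :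
    IsDensityMeasure (ultrafilterDensity 𝒰) :=
  ⟨⟨fun A => (ultrafilterDensity_mem_Icc 𝒰 A).1, fun A => (ultrafilterDensity_mem_Icc 𝒰 A).2,
    hasDensity_univ.ultrafilterDensity_eq h𝒰, fun _ _ => ultrafilterDensity_union 𝒰⟩,
    fun _ _ h => h.ultrafilterDensity_eq h𝒰⟩

/-- `(A(n) − B(n))/n → 0` iff `μ(A) = μ(B)` for every density measure `μ`. -/
theorem count_diff_tendsto_zero_iff_all_densityMeasures_eq (A B : Set ℕ) :
    Filter.Tendsto (fun n : ℕ => (count A n - count B n) / n)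
        Filter.atTop (nhds 0) ↔
      ∀ μ : Set ℕ → ℝ, IsDensityMeasure μ → μ A = μ B := by
  refine ⟨fun h μ hμ => hμ.eq_of_tendsto_count_sub_div h, fun h => ?_⟩
  rw [tendsto_iff_ultrafilter]
  intro 𝒰 h𝒰
  have hlim := (tendsto_ultrafilterDensity 𝒰 A).sub (tendsto_ultrafilterDensity 𝒰 B)
  rw [h _ (isDensityMeasure_ultrafilterDensity h𝒰), sub_self] at hlim
  simpa only [sub_div] using hlim
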